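/- arXiv:1907.01114 — 3 statements merged into one kernel-verified Lean document; each statement's English description precedes it below -/
import Mathlib

section
/- Let R be a commutative ring, v an additive valuation on R with values in ℝ≥0∞, and 𝔞_• = (𝔞_k)_{k≥1} a graded sequence of nonzero ideals with v(𝔞_•) := inf_{k≥1} v(𝔞_k)/k = 1. Let 𝔞^v_k := {f ∈ R : v(f) ≥ k} be the valuation ideals of v. Then: (i) 𝔞_k ⊆ 𝔞^v_k for every k ≥ 1; (ii) v(𝔞^v_•) := inf_{k≥1} v(𝔞^v_k)/k = 1; and (iii) for every additive valuation w on R with values in ℝ≥0∞ one has w(𝔞^v_•) ≤ w(𝔞_•), where w(𝔟_•) := inf_{k≥1} w(𝔟_k)/k. -/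
open Filter Topology ENNReal

/-- The value of an additive `ℝ≥0∞`-valued valuation on an ideal:
`v(𝔞) := inf { v f : f ∈ 𝔞 }`. -/
noncomputable def idealVal {R : Type*} [CommRing R] (v : AddValuation R ℝ≥0∞)
    (I : Ideal R) : ℝ≥0∞ :=
  ⨅ (f : R) (_ : f ∈ I), v f

/-- The `k`-th valuation ideal `𝔞^v_k = { f ∈ R : v(f) ≥ k }` of an additive
`ℝ≥0∞`-valued valuation `v`. -/
def valIdeal {R : Type*} [CommRing R] (v : AddValuation R ℝ≥0∞) (k : ℕ) : Ideal R where
  carrier := {f : R | (k : ℝ≥0∞) ≤ v f}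
  zero_mem' := by simp [v.map_zero]
  add_mem' := fun hf hg => le_trans (le_min hf hg) (v.map_add _ _)
  smul_mem' := fun c f hf => by
    have hf' : (k : ℝ≥0∞) ≤ v f := hf
    simp only [smul_eq_mul, Set.mem_setOf_eq, v.map_mul]
    exact le_trans hf' (le_add_self)

/-- The asymptotic value `v(𝔞_•) := inf_{k≥1} v(𝔞_k)/k` of a sequence of ideals, as an
infimum rather than a limit, so that it makes sense for any sequence; `a 0` is ignored. -/
noncomputable def asymptoticVal {R : Type*} [CommRing R] (v : AddValuation R ℝ≥0∞)
    (a : ℕ → Ideal R) : ℝ≥0∞ :=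
  ⨅ (k : ℕ) (_ : 1 ≤ k), idealVal v (a k) / (k : ℝ≥0∞)

section

variable {R : Type*} [CommRing R] {v : AddValuation R ℝ≥0∞} {a b : ℕ → Ideal R}

theorem idealVal_antitone (v : AddValuation R ℝ≥0∞) : Antitone (idealVal v) :=
  fun _ _ hIJ => biInf_mono hIJ

theorem le_valIdeal_iff {I : Ideal R} {k : ℕ} :
    I ≤ valIdeal v k ↔ (k : ℝ≥0∞) ≤ idealVal v I :=
  ⟨fun h => le_iInf₂ fun _ hf => h hf, fun h f hf => h.trans (iInf₂_le f hf)⟩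

theorem le_asymptoticVal_iff {c : ℝ≥0∞} :
    c ≤ asymptoticVal v a ↔ ∀ k : ℕ, 1 ≤ k → c * k ≤ idealVal v (a k) := by
  refine le_iInf₂_iff.trans (forall₂_congr fun k hk => ?_)
  have hk₀ : (k : ℝ≥0∞) ≠ 0 := Nat.cast_ne_zero.mpr (Nat.one_le_iff_ne_zero.mp hk)
  exact ENNReal.le_div_iff_mul_le (.inl hk₀) (.inl (ENNReal.natCast_ne_top k))

theorem asymptoticVal_anti (v : AddValuation R ℝ≥0∞) (hab : ∀ k, 1 ≤ k → a k ≤ b k) :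
    asymptoticVal v b ≤ asymptoticVal v a :=
  iInf₂_mono fun k hk => ENNReal.div_le_div_right (idealVal_antitone v (hab k hk)) _

theorem one_le_asymptoticVal_iff :
    1 ≤ asymptoticVal v a ↔ ∀ k, 1 ≤ k → a k ≤ valIdeal v k := by
  simp only [le_asymptoticVal_iff, one_mul, le_valIdeal_iff]

theorem one_le_asymptoticVal_valIdeal (v : AddValuation R ℝ≥0∞) :
    1 ≤ asymptoticVal v (valIdeal v) :=
  one_le_asymptoticVal_iff.mpr fun _ _ => le_rfl

end

theorem valIdeal_of_graded_sequence_computes_general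
    {R : Type*} [CommRing R] (v : AddValuation R ℝ≥0∞) (a : ℕ → Ideal R)
    (hone : asymptoticVal v a = 1) :
    (∀ k : ℕ, 1 ≤ k → a k ≤ valIdeal v k) ∧
    asymptoticVal v (valIdeal v) = 1 ∧
    (∀ w : AddValuation R ℝ≥0∞, asymptoticVal w (valIdeal v) ≤ asymptoticVal w a) := by
  have hle : ∀ k, 1 ≤ k → a k ≤ valIdeal v k := one_le_asymptoticVal_iff.mp hone.ge
  have hmono (w : AddValuation R ℝ≥0∞) : asymptoticVal w (valIdeal v) ≤ asymptoticVal w a :=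
    asymptoticVal_anti w hle
  exact ⟨hle, ((hmono v).trans hone.le).antisymm (one_le_asymptoticVal_valIdeal v), hmono⟩

/-- Let `v` be an additive `ℝ≥0∞`-valued valuation on a commutative ring `R` and
`𝔞_•` a graded sequence of nonzero ideals with `v(𝔞_•) := inf_{k≥1} v(𝔞_k)/k = 1`.
Then: (i) `𝔞_k ⊆ 𝔞^v_k` for all `k ≥ 1`; (ii) `v(𝔞^v_•) = 1`; and (iii) for every
additive `ℝ≥0∞`-valued valuation `w` one has `w(𝔞^v_•) ≤ w(𝔞_•)`. -/
theorem valIdeal_of_graded_sequence_computes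
    {R : Type*} [CommRing R] (v : AddValuation R ℝ≥0∞) (a : ℕ → Ideal R)
    (hnz : ∀ k, 1 ≤ k → a k ≠ ⊥)
    (hgraded : ∀ k l, 1 ≤ k → 1 ≤ l → a k * a l ≤ a (k + l))
    (hone : (⨅ (k : ℕ) (_ : 1 ≤ k), idealVal v (a k) / (k : ℝ≥0∞)) = 1) :
    (∀ k : ℕ, 1 ≤ k → a k ≤ valIdeal v k) ∧
    ((⨅ (k : ℕ) (_ : 1 ≤ k), idealVal v (valIdeal v k) / (k : ℝ≥0∞)) = 1) ∧
    (∀ w : AddValuation R ℝ≥0∞,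
      (⨅ (k : ℕ) (_ : 1 ≤ k), idealVal w (valIdeal v k) / (k : ℝ≥0∞)) ≤
      (⨅ (k : ℕ) (_ : 1 ≤ k), idealVal w (a k) / (k : ℝ≥0∞))) :=
  valIdeal_of_graded_sequence_computes_general v a hone
end

section
/- Let R be a commutative ring, w an additive valuation on R with values in ℝ≥0∞, and c > 0 a real number. Let (v_j)_{j≥1} be a sequence of additive valuations on R with values in ℝ≥0∞ such that for every integer j ≥ 1 and every g ∈ R with w(g) ≥ j one has v_j(g) ≥ j/c. Then for every f ∈ R, liminf_{j→∞} v_j(f) ≥ w(f)/c. -/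
open Filter Topology ENNReal

open scoped NNReal

/-! If `r < w f`, then the power `l = ⌈j / r⌉` of `f` satisfies `w (f ^ l) ≥ l * r ≥ j`, so the
hypothesis bounds `l * v j f = v j (f ^ l)` below by `j / c`. Dividing by `l` and using that
`j / ⌈j / r⌉ → r` gives `liminf v j f ≥ r / c`. -/

lemma tendsto_div_natCeil_div_atTop {K : Type*} [Field K] [LinearOrder K] [IsStrictOrderedRing K]
    [TopologicalSpace K] [OrderTopology K] [FloorRing K] {r : K} (hr : 0 < r) :
    Tendsto (fun x : K => x / ⌈x / r⌉₊) atTop (𝓝 r) := by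
  have h : Tendsto (fun x : K => (⌈r⁻¹ * x⌉₊ : K) / x) atTop (𝓝 r⁻¹) :=
    tendsto_nat_ceil_mul_div_atTop (inv_nonneg.2 hr.le)
  simpa only [inv_div, inv_inv, inv_mul_eq_div] using h.inv₀ (inv_ne_zero hr.ne')

lemma tendsto_natCast_div_natCeil_div_atTop {r : ℝ≥0} (hr : 0 < r) :
    Tendsto (fun j : ℕ => (j : ℝ≥0) / ⌈(j : ℝ≥0) / r⌉₊) atTop (𝓝 r) := by
  have h := (tendsto_div_natCeil_div_atTop (NNReal.coe_pos.2 hr)).comp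
    (tendsto_natCast_atTop_atTop (R := ℝ))
  have hceil (j : ℕ) : ⌈(j : ℝ) / r⌉₊ = ⌈(j : ℝ≥0) / r⌉₊ := Nonneg.nat_ceil_coe ((j : ℝ≥0) / r)
  refine NNReal.tendsto_coe.1 (h.congr fun j => ?_)
  simp [hceil]

section Monoid

variable {M : Type*} [Monoid M] {w : M → ℝ≥0∞}

lemma le_liminf_of_natCast_le {u : ℕ → M → ℝ≥0∞}
    (hw : ∀ f (n : ℕ), n * w f ≤ w (f ^ n)) (hu : ∀ j f (n : ℕ), u j (f ^ n) ≤ n * u j f)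
    (h : ∀ᶠ j : ℕ in atTop, ∀ g, j ≤ w g → j ≤ u j g) (f : M) :
    w f ≤ liminf (fun j => u j f) atTop := by
  refine ENNReal.le_of_forall_nnreal_lt fun r hr => ?_
  obtain rfl | hr₀ := eq_zero_or_pos r
  · exact zero_le
  rw [← (ENNReal.tendsto_coe.2 (tendsto_natCast_div_natCeil_div_atTop hr₀)).liminf_eq]
  refine liminf_le_liminf ?_
  filter_upwards [h] with j hj
  set l : ℕ := ⌈(j : ℝ≥0) / r⌉₊
  have hlr : (j : ℝ≥0∞) ≤ l * r := by
    exact_mod_cast (div_le_iff₀ hr₀).1 (Nat.le_ceil ((j : ℝ≥0) / r))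
  have hw_pow : (j : ℝ≥0∞) ≤ w (f ^ l) := calc
    (j : ℝ≥0∞) ≤ l * r := hlr
    _ ≤ l * w f := by gcongr
    _ ≤ w (f ^ l) := hw f l
  have hu_pow : (j : ℝ≥0∞) ≤ l * u j f := (hj _ hw_pow).trans (hu j f l)
  calc (((j : ℝ≥0) / l : ℝ≥0) : ℝ≥0∞) ≤ (j : ℝ≥0∞) / l := mod_cast ENNReal.coe_div_le
    _ ≤ u j f := ENNReal.div_le_of_le_mul' hu_pow

/-- This covers the order of vanishing `w` along an ideal, for which `n * w f < w (f ^ n)` can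
happen. -/
theorem liminf_ge_of_valuation_bound_general {v : ℕ → M → ℝ≥0∞} {c : ℝ} (hc : 0 < c)
    (hw : ∀ f (n : ℕ), n * w f ≤ w (f ^ n)) (hv : ∀ j f (n : ℕ), v j (f ^ n) ≤ n * v j f)
    (h : ∀ᶠ j : ℕ in atTop, ∀ g, j ≤ w g → j / ENNReal.ofReal c ≤ v j g) (f : M) :
    w f / ENNReal.ofReal c ≤ liminf (fun j => v j f) atTop := by
  have hc₀ : ENNReal.ofReal c ≠ 0 := (ENNReal.ofReal_pos.2 hc).ne'
  rw [ENNReal.div_le_iff' hc₀ ofReal_ne_top, ← liminf_const_mul_of_ne_top ofReal_ne_top]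
  refine le_liminf_of_natCast_le (u := fun j g => ENNReal.ofReal c * v j g) hw
    (fun j g n => ?_) (h.mono fun j hj g hg => ?_) f
  · rw [mul_left_comm]
    gcongr
    exact hv j g n
  · exact (ENNReal.div_le_iff' hc₀ ofReal_ne_top).1 (hj g hg)

end Monoid

/-- Let `w` be an additive `ℝ≥0∞`-valued valuation on a commutative ring `R`, `c > 0` a
real number, and `(v_j)` a sequence of additive `ℝ≥0∞`-valued valuations such that for
every `j ≥ 1` and every `g ∈ R` with `w(g) ≥ j` one has `v_j(g) ≥ j/c`. Then for every
`f ∈ R`, `liminf_{j → ∞} v_j(f) ≥ w(f)/c`. -/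
theorem liminf_ge_of_valuation_bound
    {R : Type*} [CommRing R] (w : AddValuation R ℝ≥0∞) (c : ℝ) (hc : 0 < c)
    (v : ℕ → AddValuation R ℝ≥0∞)
    (hv : ∀ j : ℕ, 1 ≤ j → ∀ g : R, (j : ℝ≥0∞) ≤ w g →
      (j : ℝ≥0∞) / ENNReal.ofReal c ≤ v j g) :
    ∀ f : R, w f / ENNReal.ofReal c ≤ Filter.liminf (fun j : ℕ => v j f) Filter.atTop :=
  liminf_ge_of_valuation_bound_general hc (fun f n => by rw [w.map_pow, nsmul_eq_mul])
    (fun j f n => by rw [(v j).map_pow, nsmul_eq_mul]) (eventually_atTop.2 ⟨1, hv⟩)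
end

section
/- Let R be a commutative ring, 𝔞_• = (𝔞_k)_{k≥1} a graded sequence of nonzero ideals of R, and c > 0 a real number. Let (v_k)_{k≥1} be a sequence of additive valuations on R with values in ℝ≥0∞ such that v_k(𝔞_k) ≥ k/c for every k ≥ 1, and let v be an additive valuation on R with values in ℝ≥0∞ such that v(f) = lim_{k→∞} v_k(f) for every f ∈ R. Then v(𝔞_k) ≥ k/c for every k ≥ 1, and hence v(𝔞_•) := inf_{k≥1} v(𝔞_k)/k ≥ 1/c. -/
open Filter Topology ENNReal

theorem pow_le_apply_mul_of_mul_le_apply_add {M : Type*} [Monoid M] [Preorder M] [MulRightMono M]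
    {a : ℕ → M} (ha : ∀ k l, 1 ≤ k → 1 ≤ l → a k * a l ≤ a (k + l))
    {k m : ℕ} (hk : 1 ≤ k) (hm : 1 ≤ m) : a k ^ m ≤ a (m * k) := by
  induction m, hm using Nat.le_induction with
  | base => simp only [pow_one, one_mul, le_refl]
  | succ m hm ih =>
    calc a k ^ (m + 1) = a k ^ m * a k := pow_succ _ _
      _ ≤ a (m * k) * a k := mul_le_mul_left ih _
      _ ≤ a (m * k + k) := ha _ _ (Nat.mul_pos hm hk) hk
      _ = a ((m + 1) * k) := by rw [Nat.succ_mul]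

theorem le_iInf_div_natCast_iff {x : ℕ → ℝ≥0∞} {t : ℝ≥0∞} :
    t ≤ ⨅ (k : ℕ) (_ : 1 ≤ k), x k / k ↔ ∀ k : ℕ, 1 ≤ k → k * t ≤ x k := by
  rw [le_iInf₂_iff]
  refine forall₂_congr fun k hk => ?_
  have hk0 : (k : ℝ≥0∞) ≠ 0 := Nat.cast_ne_zero.mpr (Nat.one_le_iff_ne_zero.mp hk)
  rw [ENNReal.le_div_iff_mul_le (.inl hk0) (.inl (natCast_ne_top k)), mul_comm]

section Valuation

variable {R : Type*} [CommRing R]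

theorem le_idealVal_iff {v : AddValuation R ℝ≥0∞} {I : Ideal R} {t : ℝ≥0∞} :
    t ≤ idealVal v I ↔ ∀ f ∈ I, t ≤ v f :=
  le_iInf₂_iff

theorem le_apply_of_pow_mem {v : AddValuation R ℝ≥0∞} {I : Ideal R} {t : ℝ≥0∞} {f : R} {m : ℕ}
    (hm : 1 ≤ m) (hf : f ^ m ∈ I) (ht : m * t ≤ idealVal v I) : t ≤ v f := by
  have hm0 : (m : ℝ≥0∞) ≠ 0 := Nat.cast_ne_zero.mpr (Nat.one_le_iff_ne_zero.mp hm)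
  have hmul : m * t ≤ m * v f :=
    calc m * t ≤ v (f ^ m) := le_idealVal_iff.mp ht _ hf
      _ = m * v f := by rw [v.map_pow, nsmul_eq_mul]
  exact (ENNReal.mul_le_mul_iff_right hm0 (natCast_ne_top m)).mp hmul

variable {a : ℕ → Ideal R} {t : ℝ≥0∞} {u : ℕ → AddValuation R ℝ≥0∞}

/- Only the indices `m * k` matter: there `f ^ m ∈ a (m * k)` gives `m * k * t ≤ m * u (m * k) f`,
and the factor `m` cancels, leaving a bound independent of `m`. -/
theorem natCast_mul_le_limsup_of_pow_mem (hu : ∀ᶠ n : ℕ in atTop, n * t ≤ idealVal (u n) (a n))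
    {k : ℕ} (hk : 1 ≤ k) {f : R} (hf : ∀ m, 1 ≤ m → f ^ m ∈ a (m * k)) :
    k * t ≤ limsup (fun n => u n f) atTop := by
  have hmultiples : Tendsto (fun m : ℕ => m * k) atTop atTop := tendsto_id.atTop_mul_const' hk
  have hbound : ∀ᶠ m : ℕ in atTop, k * t ≤ u (m * k) f := by
    filter_upwards [eventually_ge_atTop 1, hmultiples.eventually hu] with m hm hum
    rw [Nat.cast_mul, mul_assoc] at hum
    exact le_apply_of_pow_mem hm (hf m hm) hum
  exact le_limsup_of_frequently_le (hmultiples.frequently hbound.frequently)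

theorem limit_valuation_graded_bound_general {v : AddValuation R ℝ≥0∞}
    (hpow : ∀ k m, 1 ≤ k → 1 ≤ m → a k ^ m ≤ a (m * k))
    (hu : ∀ᶠ k : ℕ in atTop, k * t ≤ idealVal (u k) (a k))
    (hlimsup : ∀ f : R, limsup (fun k => u k f) atTop ≤ v f) :
    (∀ k : ℕ, 1 ≤ k → k * t ≤ idealVal v (a k)) ∧
      t ≤ ⨅ (k : ℕ) (_ : 1 ≤ k), idealVal v (a k) / k := by
  have hbound (k : ℕ) (hk : 1 ≤ k) : k * t ≤ idealVal v (a k) :=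
    le_idealVal_iff.mpr fun f hf =>
      (natCast_mul_le_limsup_of_pow_mem hu hk fun m hm =>
        hpow k m hk hm (Ideal.pow_mem_pow hf m)).trans (hlimsup f)
  exact ⟨hbound, le_iInf_div_natCast_iff.mpr hbound⟩

end Valuation

/-- Let `𝔞_•` be a graded sequence of nonzero ideals of a commutative ring `R`, `c > 0` a
real number, `(v_k)` a sequence of additive `ℝ≥0∞`-valued valuations with
`v_k(𝔞_k) ≥ k/c` for all `k ≥ 1`, and `v` an additive `ℝ≥0∞`-valued valuation which is
the pointwise limit of the `v_k`. Then `v(𝔞_k) ≥ k/c` for every `k ≥ 1`, and hence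
`v(𝔞_•) := inf_{k≥1} v(𝔞_k)/k ≥ 1/c`. -/
theorem limit_valuation_graded_bound
    {R : Type*} [CommRing R] (a : ℕ → Ideal R)
    (hnz : ∀ k, 1 ≤ k → a k ≠ ⊥)
    (hgraded : ∀ k l, 1 ≤ k → 1 ≤ l → a k * a l ≤ a (k + l))
    (c : ℝ) (hc : 0 < c)
    (vk : ℕ → AddValuation R ℝ≥0∞) (v : AddValuation R ℝ≥0∞)
    (hvk : ∀ k : ℕ, 1 ≤ k → (k : ℝ≥0∞) / ENNReal.ofReal c ≤ idealVal (vk k) (a k))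
    (hlim : ∀ f : R, Tendsto (fun k : ℕ => vk k f) atTop (𝓝 (v f))) :
    (∀ k : ℕ, 1 ≤ k → (k : ℝ≥0∞) / ENNReal.ofReal c ≤ idealVal v (a k)) ∧
    1 / ENNReal.ofReal c ≤ ⨅ (k : ℕ) (_ : 1 ≤ k), idealVal v (a k) / (k : ℝ≥0∞) := by
  simp only [div_eq_mul_inv _ (ENNReal.ofReal c), one_mul] at hvk ⊢
  exact limit_valuation_graded_bound_general
    (fun _ _ => pow_le_apply_mul_of_mul_le_apply_add hgraded)
    ((eventually_ge_atTop 1).mono hvk) (fun f => (hlim f).limsup_eq.le)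
end
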